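/- Fix an integer q ≥ 2 and define the formal power series H ∈ ℚ[[z]] by H = Σ_{k≥0} h_k z^k with h_k = q^k·((q-1)k+1)^{k-1}/k!. Set ψ := z·H^{q-1} ∈ ℚ[[z]]. Then ψ has zero constant term and satisfies the Pólya equation ψ = z·exp(q(q-1)·ψ), where exp denotes the formal exponential Σ_{n≥0} (·)^n/n! applied to the power series q(q-1)ψ with zero constant term. -/

import Mathlib

open PowerSeries

/-- The formal exponential `exp F = ∑_{n≥0} Fⁿ/n!` of a formal power series `F ∈ ℚ[[z]]`
with zero constant term, given coefficient-wise. -/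
noncomputable def expPS (F : PowerSeries ℚ) : PowerSeries ℚ :=
  PowerSeries.mk fun n =>
    ∑ m ∈ Finset.range (n + 1), (PowerSeries.coeff n (F ^ m)) / (Nat.factorial m : ℚ)

open Finset
open scoped Nat Polynomial

/-!
Put `A₀ = 1` and `Aₙ(y) = y (y + n a)ⁿ⁻¹`, and let `E_y = ∑ Aₙ(y) zⁿ/n!`. Writing
`B_x = ∑ (x + n a)ⁿ zⁿ/n!`, Abel's generalization of the binomial theorem says
`E_y B_x = B_{y + x}`. Since `E_y' = y B_{y + a}` and `(z E_a)' = B_a`, the series `E_y` solves the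
linear equation `F' = y (z E_a)' F`, so that `E_y = exp (y z E_a)` and `E_y ^ k = E_{k y}`.
For `a = q (q - 1)` the coefficients of `H` are those of `E_q`; hence `ψ = z E_q ^ (q - 1) = z E_a`,
and the Pólya equation is the case `y = a` of `E_y = exp (y z E_a)`.
-/

section DifferentialEquation

variable {R : Type*} [CommRing R]

theorem eq_of_derivative_eq_mul [IsAddTorsionFree R] {F G g : R⟦X⟧} (hF : d⁄dX R F = g * F)
    (hG : d⁄dX R G = g * G) (h₀ : constantCoeff F = constantCoeff G) : F = G := by
  suffices h : ∀ n, coeff n F = coeff n G from PowerSeries.ext h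
  intro n
  induction n using Nat.strong_induction_on with
  | _ n ih =>
    cases n with
    | zero => simpa using h₀
    | succ n =>
      have h : coeff n (d⁄dX R F) = coeff n (d⁄dX R G) := by
        rw [hF, hG, coeff_mul, coeff_mul]
        refine sum_congr rfl fun ij hij ↦ ?_
        rw [ih ij.2 (by have := mem_antidiagonal.1 hij; lia)]
      rw [coeff_derivative, coeff_derivative] at h
      refine nsmul_right_injective n.succ_ne_zero ?_
      simpa [nsmul_eq_mul, mul_comm] using h

end DifferentialEquation

section Exponential

variable {R : Type*} [CommRing R] [Algebra ℚ R]

theorem derivative_exp_subst {F : R⟦X⟧} (hF : constantCoeff F = 0) :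
    d⁄dX R ((exp R).subst F) = d⁄dX R F * (exp R).subst F := by
  rw [derivative_subst (.of_constantCoeff_zero' hF), derivative_exp, mul_comm]

theorem constantCoeff_exp_subst {F : R⟦X⟧} (hF : constantCoeff F = 0) :
    constantCoeff ((exp R).subst F) = 1 := by
  rw [← coeff_zero_eq_constantCoeff_apply, coeff_subst' (.of_constantCoeff_zero' hF),
    finsum_eq_single _ 0 fun d hd ↦ by simp [hF, hd]]
  simp

theorem expPS_eq_exp_subst {F : ℚ⟦X⟧} (hF : constantCoeff F = 0) :
    expPS F = (exp ℚ).subst F := by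
  ext n
  rw [expPS, coeff_mk, coeff_subst' (.of_constantCoeff_zero' hF),
    finsum_eq_sum_of_support_subset (s := range (n + 1))]
  · refine sum_congr rfl fun m _ ↦ ?_
    simp [div_eq_inv_mul]
  · refine Function.support_subset_iff'.2 fun m hm ↦ ?_
    have hnm : n < m := by
      rw [mem_coe, mem_range] at hm
      lia
    have hdvd : (X : ℚ⟦X⟧) ^ m ∣ F ^ m := pow_dvd_pow_of_dvd (X_dvd_iff.2 hF) m
    rw [X_pow_dvd_iff.1 hdvd n hnm, smul_zero]

end Exponential

section AbelPolynomials

variable {R : Type*} [CommRing R]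

/-- The Abel polynomial `Aₙ(y) = y (y + n a)ⁿ⁻¹`, with `A₀ = 1`. -/
noncomputable def abelPoly (a : R) : ℕ → R[X]
  | 0 => 1
  | n + 1 => Polynomial.X * (Polynomial.X + Polynomial.C ((n + 1) * a)) ^ n

theorem abelPoly_zero (a : R) : abelPoly a 0 = 1 := rfl

theorem eval_abelPoly_succ (a y : R) (n : ℕ) :
    (abelPoly a (n + 1)).eval y = y * (y + (n + 1) * a) ^ n := by
  simp [abelPoly]

theorem derivative_abelPoly_succ (a : R) (n : ℕ) :
    (abelPoly a (n + 1)).derivative =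
      (n + 1) * (abelPoly a n).comp (Polynomial.X + Polynomial.C a) := by
  cases n with
  | zero => simp [abelPoly]
  | succ n =>
    simp only [abelPoly, Polynomial.derivative_mul, Polynomial.derivative_X,
      Polynomial.derivative_X_add_C_pow, Polynomial.mul_comp, Polynomial.X_comp,
      Polynomial.pow_comp, Polynomial.add_comp, Polynomial.C_comp, Nat.add_sub_cancel]
    simp only [Nat.cast_succ, map_mul, map_add, map_natCast, map_one]
    ring

theorem add_one_mul_eval_self_abelPoly (a : R) (n : ℕ) :
    (n + 1) * (abelPoly a n).eval a = (a + n * a) ^ n := by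
  cases n with
  | zero => simp [abelPoly]
  | succ n =>
    rw [eval_abelPoly_succ, Nat.cast_succ]
    ring

theorem polynomial_ext_of_derivative_eq [IsAddTorsionFree R] {f g : R[X]}
    (hd : f.derivative = g.derivative) (h₀ : f.eval 0 = g.eval 0) : f = g := by
  refine Polynomial.coe_injective R (derivative.ext ?_ ?_)
  · rw [derivative_coe, derivative_coe, hd]
  · simpa [Polynomial.coeff_zero_eq_eval_zero] using h₀

theorem sum_choose_mul_abelPoly_mul_pow [IsAddTorsionFree R] (a x : R) (n : ℕ) :
    ∑ ij ∈ antidiagonal n,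
        n.choose ij.1 * abelPoly a ij.1 * Polynomial.C ((x + ij.2 * a) ^ ij.2) =
      (Polynomial.X + Polynomial.C (x + n * a)) ^ n := by
  induction n with
  | zero => simp [abelPoly]
  | succ n ih =>
    apply polynomial_ext_of_derivative_eq
    -- Both sides have the derivative `n + 1` times the case `n` translated by `a`.
    · have hchoose (i : ℕ) : ((n + 1).choose (i + 1) : R[X]) * (i + 1) = (n + 1) * n.choose i := by
        exact_mod_cast congrArg (Nat.cast (R := R[X])) (Nat.add_one_mul_choose_eq n i).symm
      calc
        _ = (n + 1) * (∑ ij ∈ antidiagonal n, n.choose ij.1 * abelPoly a ij.1 *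
              Polynomial.C ((x + ij.2 * a) ^ ij.2)).comp (Polynomial.X + Polynomial.C a) := by
          simp only [Nat.sum_antidiagonal_succ, Polynomial.derivative_add, abelPoly_zero,
            Polynomial.derivative_sum, Polynomial.derivative_mul, Polynomial.derivative_natCast,
            Polynomial.derivative_C, Polynomial.derivative_one, derivative_abelPoly_succ,
            Polynomial.sum_comp, Polynomial.mul_comp, Polynomial.natCast_comp,
            Polynomial.C_comp, mul_sum, ← mul_assoc, hchoose, mul_zero, zero_mul, zero_add,
            add_zero]
        _ = _ := by
          rw [ih, Polynomial.derivative_X_add_C_pow, Polynomial.pow_comp, Polynomial.add_comp,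
            Polynomial.X_comp, Polynomial.C_comp, Nat.add_sub_cancel]
          simp only [Nat.cast_succ, map_mul, map_add, map_natCast, map_one]
          ring
    · simp [Nat.sum_antidiagonal_succ, Polynomial.eval_finsetSum, abelPoly]

end AbelPolynomials

section ExponentialGeneratingFunctions

variable {R : Type*} [CommRing R] [Algebra ℚ R]

/-- The exponential generating function `∑ uₙ zⁿ/n!` of a sequence `u`. -/
noncomputable def egf (u : ℕ → R) : R⟦X⟧ :=
  mk fun n ↦ (n ! : ℚ)⁻¹ • u n

theorem egf_mul_egf (u v : ℕ → R) :
    egf u * egf v = egf fun n ↦ ∑ ij ∈ antidiagonal n, n.choose ij.1 * u ij.1 * v ij.2 := by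
  ext n
  simp only [egf, coeff_mul, coeff_mk, smul_sum]
  refine sum_congr rfl fun ⟨i, j⟩ hij ↦ ?_
  obtain rfl := mem_antidiagonal.1 hij
  have hchoose : (i ! : ℚ)⁻¹ * (j ! : ℚ)⁻¹ = ((i + j)! : ℚ)⁻¹ * (i + j).choose i := by
    rw [Nat.cast_add_choose]
    field_simp
  rw [smul_mul_smul_comm, hchoose, mul_smul, mul_assoc, Nat.cast_smul_eq_nsmul, nsmul_eq_mul]

theorem inv_factorial_succ_smul_mul (n : ℕ) (r : R) :
    ((n + 1)! : ℚ)⁻¹ • r * (n + 1) = (n ! : ℚ)⁻¹ • r := by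
  have h : (n ! : ℚ)⁻¹ = ((n + 1)! : ℚ)⁻¹ * (n + 1 : ℕ) := by
    rw [Nat.factorial_succ]
    push_cast
    field_simp
  rw [h, mul_smul, Nat.cast_smul_eq_nsmul, nsmul_eq_mul, smul_mul_assoc, mul_comm r, Nat.cast_succ]

theorem derivative_egf (u : ℕ → R) : d⁄dX R (egf u) = egf fun n ↦ u (n + 1) := by
  ext n
  rw [coeff_derivative, egf, egf, coeff_mk, coeff_mk, inv_factorial_succ_smul_mul]

theorem derivative_X_mul_egf (u : ℕ → R) :
    d⁄dX R (X * egf u) = egf fun n ↦ (n + 1) * u n := by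
  ext n
  rw [coeff_derivative, coeff_succ_X_mul, egf, egf, coeff_mk, coeff_mk, smul_mul_assoc, mul_comm]

theorem smul_egf (r : R) (u : ℕ → R) : r • egf u = egf fun n ↦ r * u n := by
  ext n
  simp [egf]

end ExponentialGeneratingFunctions

section AbelSeries

variable {R : Type*} [CommRing R] [Algebra ℚ R]

/-- The exponential generating function of the values at `y` of the Abel polynomials. -/
noncomputable def abelSeries (a y : R) : R⟦X⟧ :=
  egf fun n ↦ (abelPoly a n).eval y

/-- The exponential generating function of the shifted powers `(x + n a)ⁿ`. -/
noncomputable def shiftedPowSeries (a x : R) : R⟦X⟧ :=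
  egf fun n ↦ (x + n * a) ^ n

theorem constantCoeff_abelSeries (a y : R) : constantCoeff (abelSeries a y) = 1 := by
  simp [abelSeries, egf, abelPoly, ← coeff_zero_eq_constantCoeff_apply]

theorem abelSeries_mul_left_self (p r : R) :
    abelSeries (r * p) r = egf fun n ↦ r ^ n * (p * n + 1) ^ (n - 1) := by
  rw [abelSeries]
  congr! 2 with n
  cases n with
  | zero => simp [abelPoly]
  | succ n =>
    have hr : r + (n + 1) * (r * p) = r * (p * (n + 1) + 1) := by ring
    rw [eval_abelPoly_succ, hr, mul_pow, Nat.add_sub_cancel, Nat.cast_succ, pow_succ']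
    ring

theorem abelSeries_mul_shiftedPowSeries (a x y : R) :
    abelSeries a y * shiftedPowSeries a x = shiftedPowSeries a (y + x) := by
  have : IsAddTorsionFree R := .of_module_rat R
  rw [abelSeries, shiftedPowSeries, shiftedPowSeries, egf_mul_egf]
  congr! 2 with n
  simpa [Polynomial.eval_finsetSum, add_assoc] using
    congrArg (Polynomial.eval y) (sum_choose_mul_abelPoly_mul_pow a x n)

theorem derivative_abelSeries (a y : R) :
    d⁄dX R (abelSeries a y) = y • shiftedPowSeries a (y + a) := by
  rw [abelSeries, shiftedPowSeries, derivative_egf, smul_egf]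
  congr! 2 with n
  rw [eval_abelPoly_succ]
  ring

theorem derivative_X_mul_abelSeries_self (a : R) :
    d⁄dX R (X * abelSeries a a) = shiftedPowSeries a a := by
  simp only [abelSeries, shiftedPowSeries, derivative_X_mul_egf, add_one_mul_eval_self_abelPoly]

theorem derivative_abelSeries_eq_mul (a y : R) :
    d⁄dX R (abelSeries a y) = d⁄dX R (y • (X * abelSeries a a)) * abelSeries a y := by
  rw [derivative_abelSeries, ← abelSeries_mul_shiftedPowSeries, Derivation.map_smul,
    derivative_X_mul_abelSeries_self, smul_mul_assoc, mul_comm]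

theorem abelSeries_eq_exp_subst (a y : R) :
    abelSeries a y = (exp R).subst (y • (X * abelSeries a a)) := by
  have : IsAddTorsionFree R := .of_module_rat R
  have h₀ : constantCoeff (y • (X * abelSeries a a)) = 0 := by simp
  refine eq_of_derivative_eq_mul (derivative_abelSeries_eq_mul a y) (derivative_exp_subst h₀) ?_
  rw [constantCoeff_abelSeries, constantCoeff_exp_subst h₀]

theorem abelSeries_pow (a y : R) (k : ℕ) : abelSeries a y ^ k = abelSeries a (k * y) := by
  have : IsAddTorsionFree R := .of_module_rat R
  refine eq_of_derivative_eq_mul ?_ (derivative_abelSeries_eq_mul a (k * y)) ?_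
  · cases k with
    | zero => simp
    | succ k =>
      rw [derivative_pow, derivative_abelSeries_eq_mul, Derivation.map_smul, Derivation.map_smul,
        smul_eq_C_mul, smul_eq_C_mul, map_mul C, map_natCast C, Nat.add_sub_cancel]
      ring
  · simp [constantCoeff_abelSeries]

end AbelSeries

/-- For `q ≥ 2` and `H = ∑ q^k((q-1)k+1)^(k-1)/k! · z^k`,
the series `ψ := z·H^(q-1)` has zero constant term and satisfies the Pólya equation
`ψ = z·exp(q(q-1)·ψ)`. -/
theorem stmt_4 (q : ℕ) (hq : 2 ≤ q)
    (H : PowerSeries ℚ)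
    (hH : H = PowerSeries.mk fun k =>
      (q : ℚ) ^ k * (((q - 1) * k + 1 : ℕ) : ℚ) ^ (k - 1) / (Nat.factorial k : ℚ))
    (ψ : PowerSeries ℚ) (hψ : ψ = PowerSeries.X * H ^ (q - 1)) :
    PowerSeries.constantCoeff ψ = 0
      ∧ ψ = PowerSeries.X * expPS (((q * (q - 1) : ℕ) : ℚ) • ψ) := by
  have hψ₀ : constantCoeff ψ = 0 := by simp [hψ]
  have hH_abel : H = abelSeries ((q * (q - 1) : ℕ) : ℚ) (q : ℚ) := by
    rw [hH, Nat.cast_mul, abelSeries_mul_left_self, egf]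
    ext k
    simp [div_eq_inv_mul]
  have hψ_abel : ψ = X * abelSeries ((q * (q - 1) : ℕ) : ℚ) ((q * (q - 1) : ℕ) : ℚ) := by
    rw [hψ, hH_abel, abelSeries_pow, ← Nat.cast_mul, mul_comm (q - 1) q]
  refine ⟨hψ₀, ?_⟩
  rw [expPS_eq_exp_subst (by simp [hψ₀]), hψ_abel, ← abelSeries_eq_exp_subst]
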